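/- Let q be a real number with 0 < q < 2 and let λ be a nonzero complex number with |arg(−λ)| < qπ/2 (equivalently, |arg λ| > π(1 − q/2) when λ is not a negative real). Then the function t ↦ |t^{q−1} · E_{q,q}(−λ t^q)|, defined for t > 0, tends to +∞ as t → ∞. (Instability of a single fractional mode when the pole lies in the unstable sector.) -/

import Mathlib

/-!
For `β > 1`, expanding `s^{q-β} / (s^q - w)` in a geometric series on a vertical line far to the
right and inverting it term by term shows that `t^{β-1} E_{q,β}(w t^q)` is the Bromwich integral of
this transform. Since `q < 2`, the map `s ↦ s^q` is injective on the right half-plane, so for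
`w = s₀^q` with `Re s₀ > 0` the transform has there a single pole, at `s₀`, which is simple with
residue `s₀^{1-β} / q`. Moving the line to `Re s = c` with `0 < c < Re s₀` leaves an error
`O(e^{ct})`, so the function is asymptotic to the residue times `e^{s₀ t}`. Smaller `β` reduce to
this case by splitting off finitely many terms of the series, which are powers of `t`. The sector
condition on the pole says that `-λ = s₀^q` for some `s₀` in the right half-plane.
-/

open Real Filter

/-- The two-parameter Mittag-Leffler function `E_{μ,ν}(z) = ∑ zⁱ / Γ(μ i + ν)`. -/
noncomputable def mittagLeffler (μ ν : ℝ) (z : ℂ) : ℂ :=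
  ∑' i : ℕ, z ^ i / (Real.Gamma (μ * i + ν) : ℂ)

section

open MeasureTheory Set Asymptotics Bornology Topology
open Complex (I VerticalIntegrable)
open scoped Complex FourierTransform

variable {E : Type*} [NormedAddCommGroup E] [NormedSpace ℂ E]

/-- The one-sided Laplace transform `s ↦ ∫₀^∞ e^{-st} g(t) dt`, with the junk value `0` where the
integral diverges. -/
noncomputable def laplaceTransform (g : ℝ → E) (s : ℂ) : E :=
  ∫ t in Ioi (0 : ℝ), cexp (-(s * t)) • g t

/-- The Bromwich integral `(2πi)⁻¹ ∫ e^{st} G(s) ds` along the vertical line `Re s = σ`, which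
inverts the Laplace transform; the line is parametrised by `s = σ + iy`. -/
noncomputable def inverseLaplace (σ : ℝ) (G : ℂ → E) (t : ℝ) : E :=
  (2 * π)⁻¹ • ∫ y : ℝ, cexp ((σ + y * I) * t) • G (σ + y * I)

lemma norm_cexp_verticalLine_mul (σ y t : ℝ) : ‖cexp ((σ + y * I) * t)‖ = rexp (σ * t) := by
  simp [Complex.norm_exp]

lemma integrable_cexp_smul_of_verticalIntegrable {G : ℂ → E} {σ : ℝ} (hG : VerticalIntegrable G σ)
    (t : ℝ) : Integrable fun y : ℝ ↦ cexp ((σ + y * I) * t) • G (σ + y * I) :=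
  hG.bdd_smul (rexp (σ * t)) (Continuous.aestronglyMeasurable (by fun_prop))
    (.of_forall fun y ↦ (norm_cexp_verticalLine_mul σ y t).le)

lemma inverseLaplace_add {F G : ℂ → E} {σ : ℝ} (hF : VerticalIntegrable F σ)
    (hG : VerticalIntegrable G σ) (t : ℝ) :
    inverseLaplace σ (fun s ↦ F s + G s) t = inverseLaplace σ F t + inverseLaplace σ G t := by
  simp only [inverseLaplace, smul_add]
  rw [integral_add (integrable_cexp_smul_of_verticalIntegrable hF t)
    (integrable_cexp_smul_of_verticalIntegrable hG t), smul_add]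

lemma inverseLaplace_const_mul (c : ℂ) (G : ℂ → ℂ) (σ t : ℝ) :
    inverseLaplace σ (fun s ↦ c * G s) t = c * inverseLaplace σ G t := by
  simp only [inverseLaplace, smul_eq_mul, mul_left_comm _ c, integral_const_mul, mul_smul_comm]

lemma inverseLaplace_congr {F G : ℂ → E} {σ : ℝ} (h : ∀ s : ℂ, s.re = σ → F s = G s) (t : ℝ) :
    inverseLaplace σ F t = inverseLaplace σ G t := by
  simp only [inverseLaplace]
  congr! 4 with y
  exact h _ (by simp)

lemma norm_inverseLaplace_le (σ : ℝ) (G : ℂ → E) (t : ℝ) :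
    ‖inverseLaplace σ G t‖ ≤ (2 * π)⁻¹ * (∫ y : ℝ, ‖G (σ + y * I)‖) * rexp (σ * t) := by
  rw [inverseLaplace, norm_smul, Real.norm_of_nonneg (by positivity), mul_assoc,
    ← integral_mul_const]
  gcongr
  refine (norm_integral_le_integral_norm _).trans_eq (integral_congr_ae (.of_forall fun y ↦ ?_))
  simp only [norm_smul, norm_cexp_verticalLine_mul, mul_comm (rexp _)]

lemma hasSum_inverseLaplace {ι : Type*} [Countable ι] {G : ι → ℂ → E} {σ : ℝ}
    (hG : ∀ i, VerticalIntegrable (G i) σ) (hsum : Summable fun i ↦ ∫ y : ℝ, ‖G i (σ + y * I)‖)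
    (t : ℝ) :
    HasSum (fun i ↦ inverseLaplace σ (G i) t) (inverseLaplace σ (fun s ↦ ∑' i, G i s) t) := by
  simp only [inverseLaplace, ← tsum_const_smul'' (cexp _)]
  refine (hasSum_integral_of_summable_integral_norm
    (fun i ↦ integrable_cexp_smul_of_verticalIntegrable (hG i) t) ?_).const_smul _
  simpa only [norm_smul, norm_cexp_verticalLine_mul, integral_const_mul] using
    hsum.mul_left (rexp (σ * t))

theorem inverseLaplace_laplaceTransform [CompleteSpace E] {g : ℝ → E} {σ t : ℝ}
    (hg : IntegrableOn (fun u : ℝ ↦ cexp (-(σ * u)) • g u) (Ioi 0))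
    (hL : VerticalIntegrable (laplaceTransform g) σ) (hgt : ContinuousAt g t) (ht : 0 < t) :
    inverseLaplace σ (laplaceTransform g) t = g t := by
  set f : ℝ → E := (Ioi 0).indicator fun u ↦ cexp (-(σ * u)) • g u with hf
  have fourier_f (ξ : ℝ) : 𝓕 f ξ = laplaceTransform g (σ + (2 * π * ξ : ℝ) * I) := by
    rw [Real.fourier_real_eq_integral_exp_smul, laplaceTransform,
      ← integral_indicator measurableSet_Ioi]
    congr with u
    by_cases hu : u ∈ Ioi (0 : ℝ)
    · rw [hf, indicator_of_mem hu, indicator_of_mem hu, smul_smul, ← Complex.exp_add]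
      congr 2
      push_cast
      ring
    · rw [hf, indicator_of_notMem hu, indicator_of_notMem hu, smul_zero]
  have f_integrable : Integrable f := (integrable_indicator_iff measurableSet_Ioi).2 hg
  have fourier_integrable : Integrable (𝓕 f) :=
    (hL.comp_mul_left' (R := 2 * π) (by positivity)).congr (.of_forall fun ξ ↦ (fourier_f ξ).symm)
  have f_continuousAt : ContinuousAt f t := by
    refine ContinuousAt.congr (f := fun u : ℝ ↦ cexp (-(σ * u)) • g u) (by fun_prop) ?_
    filter_upwards [Ioi_mem_nhds ht] with u hu using by rw [hf, indicator_of_mem hu]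
  have inversion : 𝓕⁻ (𝓕 f) t = cexp (-(σ * t)) • g t :=
    (f_integrable.fourierInv_fourier_eq fourier_integrable f_continuousAt).trans
      (indicator_of_mem ht _)
  have fourierInv_eq : 𝓕⁻ (𝓕 f) t =
      cexp (-(σ * t)) • inverseLaplace σ (laplaceTransform g) t := by
    have rescale := Measure.integral_comp_mul_left (fun y : ℝ ↦
      cexp ((σ + y * I) * t) • laplaceTransform g (σ + y * I)) (2 * π)
    rw [abs_of_pos (by positivity)] at rescale
    rw [inverseLaplace, ← rescale, ← integral_smul, Real.fourierInv_eq']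
    congr with ξ
    rw [fourier_f, smul_smul, ← Complex.exp_add]
    congr 2
    simp only [RCLike.inner_apply, conj_trivial]
    push_cast
    ring
  exact smul_right_injective E (Complex.exp_ne_zero _) (fourierInv_eq.symm.trans inversion)

/-! ### Shifting the Bromwich line -/

lemma tendsto_add_mul_I_cobounded (S : Set ℝ) :
    Tendsto (fun p : ℝ × ℝ ↦ (p.2 + p.1 * I : ℂ)) (cocompact ℝ ×ˢ 𝓟 S)
      (cobounded ℂ ⊓ 𝓟 (Complex.re ⁻¹' S)) := by
  refine tendsto_inf.2 ⟨?_, tendsto_principal.2 ?_⟩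
  · refine tendsto_norm_atTop_iff_cobounded.1 (tendsto_atTop_mono (fun p ↦ ?_)
      ((tendsto_norm_cocompact_atTop (E := ℝ)).comp tendsto_fst))
    simpa using Complex.abs_im_le_norm (p.2 + p.1 * I)
  · filter_upwards [tendsto_snd.eventually (mem_principal_self S)] with p hp
    simpa using! hp

theorem integral_verticalLine_eq_of_tendsto_zero {Φ : ℂ → E} {a b : ℝ} (hab : a ≤ b)
    (hΦ : DifferentiableOn ℂ Φ (Complex.re ⁻¹' Icc a b))
    (hlim : Tendsto Φ (cobounded ℂ ⊓ 𝓟 (Complex.re ⁻¹' Icc a b)) (𝓝 0))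
    (ha : VerticalIntegrable Φ a) (hb : VerticalIntegrable Φ b) :
    ∫ y : ℝ, Φ (a + y * I) = ∫ y : ℝ, Φ (b + y * I) := by
  by_cases hE : CompleteSpace E
  swap
  · simp [integral, hE]
  have : (cocompact ℝ).IsCountablyGenerated := by
    rw [cocompact_eq_atBot_atTop]
    infer_instance
  have uniform_lim : TendstoUniformlyOn (fun y x : ℝ ↦ Φ (x + y * I)) 0 (cocompact ℝ) (uIcc a b) :=
    tendstoUniformlyOn_iff_tendsto.2 <| tendsto_const_nhds.prodMk_nhds
      (hlim.comp (uIcc_of_le hab ▸ tendsto_add_mul_I_cobounded (Icc a b))) |>.mono_right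
        (nhds_le_uniformity 0)
  have horizontal_lim :
      Tendsto (fun y : ℝ ↦ ∫ x in a..b, Φ (x + y * I)) (cocompact ℝ) (𝓝 0) := by
    refine intervalIntegral.integral_zero (μ := volume) (a := a) (b := b) (E := E) ▸
      uniform_lim.tendsto_intervalIntegral_of_continuousOn (.of_forall fun y ↦ ?_)
    refine hΦ.continuousOn.comp (by fun_prop) fun x hx ↦ ?_
    simpa [uIcc_of_le hab] using hx
  have vertical_lim {c : ℝ} (hc : VerticalIntegrable Φ c volume) :
      Tendsto (fun T : ℝ ↦ ∫ y in -T..T, Φ (c + y * I)) atTop (𝓝 (∫ y : ℝ, Φ (c + y * I))) :=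
    intervalIntegral_tendsto_integral hc tendsto_neg_atTop_atBot tendsto_id
  have rectangle (T : ℝ) : (∫ x in a..b, Φ (x + (-T : ℝ) * I)) - (∫ x in a..b, Φ (x + T * I)) +
      I • (∫ y in -T..T, Φ (b + y * I)) - I • (∫ y in -T..T, Φ (a + y * I)) = 0 := by
    refine Complex.integral_boundary_rect_eq_zero_of_differentiableOn Φ ⟨a, -T⟩ ⟨b, T⟩
      (hΦ.mono fun s hs ↦ ?_)
    simpa only [uIcc_of_le hab] using hs.1
  have lim := (((horizontal_lim.comp (tendsto_neg_atTop_atBot.mono_right atBot_le_cocompact)).sub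
    (horizontal_lim.comp (tendsto_id.mono_right atTop_le_cocompact))).add
    ((vertical_lim hb).const_smul I)).sub ((vertical_lim ha).const_smul I)
  have lim_eq_zero := tendsto_nhds_unique lim (tendsto_const_nhds.congr fun T ↦ (rectangle T).symm)
  rw [sub_zero, zero_add, ← smul_sub, smul_eq_zero_iff_right Complex.I_ne_zero] at lim_eq_zero
  exact (sub_eq_zero.1 lim_eq_zero).symm

omit [NormedSpace ℂ E] in
lemma verticalIntegrable_of_isBigO {G : ℂ → E} {S : Set ℝ} {σ r : ℝ} (hσ : σ ∈ S) (hr : 1 < r)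
    (hG : ContinuousOn G (Complex.re ⁻¹' S))
    (hO : G =O[cobounded ℂ ⊓ 𝓟 (Complex.re ⁻¹' S)] fun s ↦ ‖s‖ ^ (-r)) :
    VerticalIntegrable G σ := by
  have line_cont : Continuous fun y : ℝ ↦ G (σ + y * I) :=
    hG.comp_continuous (by fun_prop) fun y ↦ by simpa using hσ
  have line_lim : Tendsto (fun y : ℝ ↦ (σ + y * I : ℂ)) (cocompact ℝ)
      (cobounded ℂ ⊓ 𝓟 (Complex.re ⁻¹' S)) :=
    (tendsto_add_mul_I_cobounded S).comp (tendsto_id.prodMk (tendsto_principal.2 (by simp [hσ])))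
  have norm_isBigO : (fun y : ℝ ↦ ‖(σ + y * I : ℂ)‖ ^ (-r)) =O[cocompact ℝ]
      fun y ↦ (1 + ‖y‖) ^ (-r) := by
    refine .of_bound (2⁻¹ ^ (-r)) ?_
    filter_upwards [tendsto_norm_cocompact_atTop.eventually_ge_atTop 1] with y hy
    have norm_ge : 2⁻¹ * (1 + ‖y‖) ≤ ‖(σ + y * I : ℂ)‖ := by
      have := Complex.abs_im_le_norm (σ + y * I)
      simp only [Complex.add_im, Complex.ofReal_im, Complex.mul_I_im, Complex.ofReal_re,
        zero_add, ← Real.norm_eq_abs] at this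
      linarith
    rw [Real.norm_of_nonneg (by positivity), Real.norm_of_nonneg (by positivity),
      ← mul_rpow (by positivity) (by positivity)]
    exact rpow_le_rpow_of_nonpos (by positivity) norm_ge (by linarith)
  exact line_cont.locallyIntegrable.integrable_of_isBigO_cocompact
    ((hO.comp_tendsto line_lim).trans norm_isBigO)
    ((integrable_one_add_norm (by simpa using hr)).integrableAtFilter _)

theorem inverseLaplace_eq_of_isBigO {G : ℂ → E} {a b r : ℝ} (hab : a ≤ b) (hr : 1 < r)
    (hG : DifferentiableOn ℂ G (Complex.re ⁻¹' Icc a b))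
    (hO : G =O[cobounded ℂ ⊓ 𝓟 (Complex.re ⁻¹' Icc a b)] fun s ↦ ‖s‖ ^ (-r)) (t : ℝ) :
    inverseLaplace a G t = inverseLaplace b G t := by
  have integrable {c : ℝ} (hc : c ∈ Icc a b) :
      VerticalIntegrable (fun s ↦ cexp (s * t) • G s) c volume :=
    integrable_cexp_smul_of_verticalIntegrable
      (verticalIntegrable_of_isBigO hc hr hG.continuousOn hO) t
  have exp_isBigO : (fun s : ℂ ↦ cexp (s * t)) =O[cobounded ℂ ⊓ 𝓟 (Complex.re ⁻¹' Icc a b)]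
      fun _ ↦ (1 : ℝ) := by
    refine .of_bound (rexp (max (a * t) (b * t))) (eventually_inf_principal.2 (.of_forall ?_))
    intro s hs
    have : s.re * t ≤ max (a * t) (b * t) := by
      rcases le_total 0 t with ht | ht
      · exact le_max_of_le_right (mul_le_mul_of_nonneg_right hs.2 ht)
      · exact le_max_of_le_left (mul_le_mul_of_nonpos_right hs.1 ht)
    simpa [Complex.norm_exp] using this
  have lim : Tendsto (fun s : ℂ ↦ cexp (s * t) • G s) (cobounded ℂ ⊓ 𝓟 (Complex.re ⁻¹' Icc a b))
      (𝓝 0) := by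
    refine (exp_isBigO.smul hO).trans_tendsto ?_
    simpa [Function.comp_def] using (tendsto_rpow_neg_atTop (by linarith)).comp
      ((tendsto_norm_cobounded_atTop (E := ℂ)).mono_left inf_le_left)
  exact congrArg _ (integral_verticalLine_eq_of_tendsto_zero hab
    (DifferentiableOn.fun_smul (by fun_prop) hG) lim (integrable ⟨le_rfl, hab⟩)
    (integrable ⟨hab, le_rfl⟩))

/-! ### Transforms of powers and exponentials -/

lemma integrableOn_cexp_smul_of_le_re {g : ℝ → E} {b : ℝ} {s : ℂ}
    (hg : IntegrableOn (fun u : ℝ ↦ cexp (-(b * u)) • g u) (Ioi 0)) (hs : b ≤ s.re) :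
    IntegrableOn (fun u : ℝ ↦ cexp (-(s * u)) • g u) (Ioi 0) := by
  have bound : ∀ᵐ u : ℝ ∂volume.restrict (Ioi 0), ‖cexp (-((s - b) * u))‖ ≤ 1 := by
    filter_upwards [ae_restrict_mem measurableSet_Ioi] with u hu
    simpa [Complex.norm_exp] using mul_nonneg (sub_nonneg.2 hs) (le_of_lt hu)
  refine (hg.bdd_smul 1 (Continuous.aestronglyMeasurable (by fun_prop)) bound).congr
    (.of_forall fun u ↦ ?_)
  simp only [Pi.smul_apply', smul_smul, ← Complex.exp_add]
  ring_nf

lemma differentiableAt_laplaceTransform {g : ℝ → E} {b : ℝ} {s : ℂ}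
    (hg : IntegrableOn (fun u : ℝ ↦ cexp (-(b * u)) • g u) (Ioi 0)) (hs : b < s.re) :
    DifferentiableAt ℂ (laplaceTransform g) s := by
  obtain ⟨c, hbc, hcs⟩ := exists_between hs
  have integrable {z : ℂ} (hz : c < z.re) := integrableOn_cexp_smul_of_le_re hg (hbc.trans hz).le
  have nhds : {z : ℂ | c < z.re} ∈ 𝓝 s :=
    (isOpen_lt continuous_const Complex.continuous_re).mem_nhds hcs
  refine (hasDerivAt_integral_of_dominated_loc_of_deriv_le (𝕜 := ℂ)
    (F := fun z u ↦ cexp (-(z * u)) • g u)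
    (F' := fun z u ↦ (-u : ℂ) • cexp (-(z * u)) • g u)
    (bound := fun u : ℝ ↦ (c - b)⁻¹ * ‖cexp (-(b * u)) • g u‖) nhds ?_ (integrable hcs) ?_ ?_
    (hg.norm.const_mul _) ?_).2.differentiableAt
  · filter_upwards [nhds] with z hz using (integrable hz).aestronglyMeasurable
  · exact AEStronglyMeasurable.smul (Continuous.aestronglyMeasurable (by fun_prop))
      (integrable hcs).aestronglyMeasurable
  · filter_upwards [ae_restrict_mem measurableSet_Ioi] with u (hu : 0 < u) z (hz : c < z.re)
    have exp_le : u * rexp (-(z.re * u)) ≤ (c - b)⁻¹ * rexp (-(b * u)) := by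
      rw [inv_mul_eq_div, le_div_iff₀' (sub_pos.2 hbc), ← mul_assoc]
      calc (c - b) * u * rexp (-(z.re * u)) ≤ rexp ((c - b) * u) * rexp (-(z.re * u)) := by
            gcongr
            linarith [Real.add_one_le_exp ((c - b) * u)]
        _ ≤ rexp (-(b * u)) := by
            rw [← Real.exp_add, Real.exp_le_exp]
            nlinarith
    simpa [norm_smul, Complex.norm_exp, abs_of_pos hu, mul_assoc] using
      mul_le_mul_of_nonneg_right exp_le (norm_nonneg (g u))
  · refine .of_forall fun u z _ ↦ ?_
    have := (((hasDerivAt_id z).mul_const (u : ℂ)).neg.cexp).smul_const (g u)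
    simpa [mul_comm, smul_smul] using this

lemma eqOn_re_pos_of_eq_ofReal {f g : ℂ → E} [CompleteSpace E]
    (hf : DifferentiableOn ℂ f {s | 0 < s.re}) (hg : DifferentiableOn ℂ g {s | 0 < s.re})
    (hfg : ∀ x : ℝ, 0 < x → f x = g x) : EqOn f g {s | 0 < s.re} := by
  have isOpen : IsOpen {s : ℂ | 0 < s.re} := isOpen_lt continuous_const Complex.continuous_re
  refine AnalyticOnNhd.eqOn_of_preconnected_of_frequently_eq (𝕜 := ℂ) (hf.analyticOnNhd isOpen)
    (hg.analyticOnNhd isOpen) (convex_halfSpace_re_gt 0).isPreconnected (z₀ := (1 : ℝ))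
    (by simp) ?_
  have ofReal_lim : Tendsto ((↑) : ℝ → ℂ) (𝓝[≠] 1) (𝓝[≠] (1 : ℝ)) :=
    Complex.continuous_ofReal.continuousAt.continuousWithinAt.tendsto_nhdsWithin
      fun x hx ↦ by simpa using hx
  refine ofReal_lim.frequently (Eventually.frequently ?_)
  filter_upwards [nhdsWithin_le_nhds (Ioi_mem_nhds one_pos)] with x hx using hfg x hx

lemma integrableOn_cexp_smul_rpow {a σ : ℝ} (ha : 0 < a) (hσ : 0 < σ) :
    IntegrableOn (fun u : ℝ ↦ cexp (-(σ * u)) • ((u ^ (a - 1) : ℝ) : ℂ)) (Ioi 0) := by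
  have := (integrableOn_rpow_mul_exp_neg_mul_rpow (s := a - 1) (by linarith) one_pos hσ).ofReal
    (𝕜 := ℂ)
  refine this.congr (.of_forall fun u ↦ ?_)
  simp [mul_comm]

theorem laplaceTransform_rpow {a : ℝ} (ha : 0 < a) {s : ℂ} (hs : 0 < s.re) :
    laplaceTransform (fun t ↦ ((t ^ (a - 1) : ℝ) : ℂ)) s = Real.Gamma a * s ^ (-a : ℂ) := by
  refine eqOn_re_pos_of_eq_ofReal (g := fun s ↦ Real.Gamma a * s ^ (-a : ℂ))
    (fun z (hz : 0 < z.re) ↦ ?_) (fun z (hz : 0 < z.re) ↦ ?_) (fun x hx ↦ ?_) hs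
  · obtain ⟨b, hb, hbz⟩ := exists_between hz
    exact (differentiableAt_laplaceTransform (integrableOn_cexp_smul_rpow ha hb)
      hbz).differentiableWithinAt
  · exact ((differentiableAt_id.cpow_const (.inl hz)).const_mul _).differentiableWithinAt
  · have := congrArg ((↑) : ℝ → ℂ) (Real.integral_rpow_mul_exp_neg_mul_Ioi ha hx)
    rw [← integral_complex_ofReal] at this
    simp only [laplaceTransform]
    convert this using 1
    · simp [mul_comm]
    · rw [one_div, Real.inv_rpow hx.le, ← Real.rpow_neg hx.le]
      push_cast [Complex.ofReal_cpow hx.le]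
      ring

lemma verticalIntegrable_cpow_neg {a σ : ℝ} (ha : 1 < a) (hσ : 0 < σ) :
    VerticalIntegrable (fun s : ℂ ↦ s ^ (-a : ℂ)) σ := by
  refine verticalIntegrable_of_isBigO (S := Ioi 0) hσ ha (fun s hs ↦ ?_) (.of_norm_le fun s ↦ ?_)
  · exact (continuousAt_cpow_const (.inl hs)).continuousWithinAt
  · simpa using (Complex.norm_cpow_real s (-a)).le

theorem inverseLaplace_cpow_neg {a σ t : ℝ} (ha : 1 < a) (hσ : 0 < σ) (ht : 0 < t) :
    inverseLaplace σ (fun s ↦ s ^ (-a : ℂ)) t = ((t ^ (a - 1) / Real.Gamma a : ℝ) : ℂ) := by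
  have a_pos : 0 < a := zero_lt_one.trans ha
  have transform_eq (s : ℂ) (hs : s.re = σ) :
      laplaceTransform (fun t ↦ ((t ^ (a - 1) : ℝ) : ℂ)) s = Real.Gamma a * s ^ (-a : ℂ) :=
    laplaceTransform_rpow a_pos (hs ▸ hσ)
  have inversion := inverseLaplace_laplaceTransform (integrableOn_cexp_smul_rpow a_pos hσ)
    (((verticalIntegrable_cpow_neg ha hσ).const_mul (Real.Gamma a : ℂ)).congr
      (.of_forall fun y ↦ (transform_eq _ (by simp)).symm))
    (Complex.continuous_ofReal.continuousAt.comp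
      (Real.continuousAt_rpow_const t (a - 1) (.inl ht.ne'))) ht
  rw [inverseLaplace_congr transform_eq, inverseLaplace_const_mul] at inversion
  rw [Complex.ofReal_div, eq_div_iff (by exact_mod_cast (Real.Gamma_pos_of_pos a_pos).ne'),
    mul_comm, inversion]

lemma integrableOn_cexp_smul_cexp {a s : ℂ} (h : a.re < s.re) :
    IntegrableOn (fun t : ℝ ↦ cexp (-(s * t)) • cexp (a * t)) (Ioi 0) := by
  refine (integrableOn_exp_mul_complex_Ioi (a := a - s) (by simpa using h) 0).congr
    (.of_forall fun t ↦ ?_)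
  simp only [smul_eq_mul, ← Complex.exp_add]
  ring_nf

lemma laplaceTransform_cexp {a s : ℂ} (h : a.re < s.re) :
    laplaceTransform (fun t ↦ cexp (a * t)) s = (s - a)⁻¹ := by
  have := integral_exp_mul_complex_Ioi (a := a - s) (by simpa using h) 0
  rw [laplaceTransform, ← neg_sub a s, inv_neg]
  convert this using 1
  · congr with t
    rw [smul_eq_mul, ← Complex.exp_add]
    ring_nf
  · simp [div_eq_mul_inv]

lemma isBigO_inv_sub_cobounded (a : ℂ) :
    (fun s ↦ (s - a)⁻¹) =O[cobounded ℂ] fun s ↦ ‖s‖ ^ (-1 : ℝ) := by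
  refine .of_bound 2 ?_
  filter_upwards [tendsto_norm_cobounded_atTop.eventually_gt_atTop (2 * ‖a‖)] with s hs
  have norm_pos : 0 < ‖s‖ := (by positivity : 0 ≤ 2 * ‖a‖).trans_lt hs
  have half_le : ‖s‖ / 2 ≤ ‖s - a‖ := by linarith [norm_sub_norm_le s a]
  calc ‖(s - a)⁻¹‖ ≤ (‖s‖ / 2)⁻¹ := by rw [norm_inv]; gcongr
    _ = 2 * ‖‖s‖ ^ (-1 : ℝ)‖ := by
      rw [Real.rpow_neg_one, norm_inv, norm_norm, inv_div, div_eq_mul_inv]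

lemma isBigO_inv_sub_sub_inv_sub_cobounded (a b : ℂ) :
    (fun s ↦ (s - a)⁻¹ - (s - b)⁻¹) =O[cobounded ℂ] fun s ↦ ‖s‖ ^ (-2 : ℝ) := by
  refine (((isBigO_inv_sub_cobounded a).mul (isBigO_inv_sub_cobounded b)).const_mul_left
    (a - b)).congr' ?_ (.of_forall fun s ↦ ?_)
  · filter_upwards [eventually_ne_cobounded a, eventually_ne_cobounded b] with s ha hb
    rw [inv_sub_inv (sub_ne_zero.2 ha) (sub_ne_zero.2 hb), sub_sub_sub_cancel_left, div_eq_mul_inv,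
      mul_inv]
  · simp only [← Real.rpow_add' (norm_nonneg s) (by norm_num : (-1 : ℝ) + -1 ≠ 0)]
    norm_num

lemma verticalIntegrable_inv_sub_sub_inv_sub {a b : ℂ} {σ : ℝ} (ha : a.re ≠ σ) (hb : b.re ≠ σ) :
    VerticalIntegrable (fun s ↦ (s - a)⁻¹ - (s - b)⁻¹) σ := by
  have sub_ne {c s : ℂ} (hc : c.re ≠ σ) (hs : s.re = σ) : s - c ≠ 0 :=
    sub_ne_zero.2 fun h ↦ hc (h ▸ hs)
  refine verticalIntegrable_of_isBigO (mem_singleton σ) one_lt_two (.sub ?_ ?_)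
    ((isBigO_inv_sub_sub_inv_sub_cobounded a b).mono inf_le_left)
  · exact .inv₀ (by fun_prop) fun s hs ↦ sub_ne ha hs
  · exact .inv₀ (by fun_prop) fun s hs ↦ sub_ne hb hs

theorem inverseLaplace_inv_sub_sub_inv_sub {a b : ℂ} {σ t : ℝ} (ha : a.re < σ) (hb : b.re < σ)
    (ht : 0 < t) :
    inverseLaplace σ (fun s ↦ (s - a)⁻¹ - (s - b)⁻¹) t = cexp (a * t) - cexp (b * t) := by
  have integrable {c : ℂ} (hc : c.re < σ) {s : ℂ} (hs : s.re = σ) :=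
    integrableOn_cexp_smul_cexp (hs.symm ▸ hc : c.re < s.re)
  have transform_eq (s : ℂ) (hs : s.re = σ) :
      laplaceTransform (fun t ↦ cexp (a * t) - cexp (b * t)) s = (s - a)⁻¹ - (s - b)⁻¹ := by
    rw [← laplaceTransform_cexp (hs.symm ▸ ha), ← laplaceTransform_cexp (hs.symm ▸ hb)]
    simp only [laplaceTransform, smul_sub]
    exact integral_sub (integrable ha hs) (integrable hb hs)
  rw [← inverseLaplace_congr transform_eq]
  refine inverseLaplace_laplaceTransform ?_ ?_ (by fun_prop) ht
  · simpa only [smul_sub] using!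
      (integrable ha (Complex.ofReal_re σ)).sub (integrable hb (Complex.ofReal_re σ))
  · exact (verticalIntegrable_inv_sub_sub_inv_sub ha.ne hb.ne).congr
      (.of_forall fun y ↦ (transform_eq _ (by simp)).symm)

/-! ### Growth produced by a simple pole -/

lemma isBigO_rpow_neg_cobounded {r r' : ℝ} (h : r' ≤ r) :
    (fun s : ℂ ↦ ‖s‖ ^ (-r)) =O[cobounded ℂ] fun s ↦ ‖s‖ ^ (-r') := by
  refine .of_norm_eventuallyLE ?_
  filter_upwards [tendsto_norm_cobounded_atTop.eventually_ge_atTop 1] with s hs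
  rw [Real.norm_of_nonneg (by positivity)]
  exact Real.rpow_le_rpow_of_exponent_le hs (neg_le_neg h)

lemma tendsto_cexp_mul_atTop_zero {a : ℂ} (ha : a.re < 0) :
    Tendsto (fun t : ℝ ↦ cexp (a * t)) atTop (𝓝 0) := by
  simpa [Complex.tendsto_exp_nhds_zero_iff] using tendsto_id.const_mul_atTop_of_neg ha

lemma tendsto_inverseLaplace_mul_cexp_zero {s₀ : ℂ} {c : ℝ} (hc : c < s₀.re) (G : ℂ → ℂ) :
    Tendsto (fun t : ℝ ↦ inverseLaplace c G t * cexp (-s₀ * t)) atTop (𝓝 0) := by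
  have bound_lim := (tendsto_cexp_mul_atTop_zero (a := c - s₀) (by simpa using hc)).norm.const_mul
    ((2 * π)⁻¹ * ∫ y : ℝ, ‖G (c + y * I)‖)
  rw [norm_zero, mul_zero] at bound_lim
  refine squeeze_zero_norm (fun t ↦ ?_) bound_lim
  calc ‖inverseLaplace c G t * cexp (-s₀ * t)‖
      ≤ (2 * π)⁻¹ * (∫ y : ℝ, ‖G (c + y * I)‖) * rexp (c * t) * ‖cexp (-s₀ * t)‖ := by
        rw [norm_mul]
        gcongr
        exact norm_inverseLaplace_le c G t
    _ = (2 * π)⁻¹ * (∫ y : ℝ, ‖G (c + y * I)‖) * ‖cexp ((c - s₀) * t)‖ := by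
        simp only [Complex.norm_exp, mul_assoc, ← Real.exp_add]
        simp [sub_eq_add_neg, add_mul]

-- The kernel `1 / (s - s₀)` alone is not integrable on vertical lines, so the residue is removed
-- together with that of an auxiliary pole `b` to the left of the strip.
theorem inverseLaplace_eq_add_of_simplePole {F R : ℂ → ℂ} {s₀ A b : ℂ} {c σ r t : ℝ}
    (hb : b.re < c) (hc : c < s₀.re) (hσ : s₀.re < σ) (hr : 1 < r)
    (hR : DifferentiableOn ℂ R (Complex.re ⁻¹' Icc c σ))
    (hF : ∀ s, s.re ∈ Icc c σ → s ≠ s₀ → F s = R s + A / (s - s₀))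
    (hO : F =O[cobounded ℂ ⊓ 𝓟 (Complex.re ⁻¹' Icc c σ)] fun s ↦ ‖s‖ ^ (-r)) (ht : 0 < t) :
    inverseLaplace σ F t = inverseLaplace c (fun s ↦ R s + A / (s - b)) t +
      A * (cexp (s₀ * t) - cexp (b * t)) := by
  have hcσ : c ≤ σ := (hc.trans hσ).le
  have hr' : 1 < min r 2 := lt_min hr one_lt_two
  set G : ℂ → ℂ := fun s ↦ R s + A / (s - b) with hG
  have F_eq (s : ℂ) (hs : s.re ∈ Icc c σ) (hs₀ : s ≠ s₀) :
      F s = G s + A * ((s - s₀)⁻¹ - (s - b)⁻¹) := by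
    rw [hF s hs hs₀, hG]
    ring
  have G_differentiableOn : DifferentiableOn ℂ G (Complex.re ⁻¹' Icc c σ) := by
    refine hR.add (.div (by fun_prop) (by fun_prop) fun s hs ↦ sub_ne_zero.2 ?_)
    rintro rfl
    exact hb.not_ge hs.1
  have G_isBigO : G =O[cobounded ℂ ⊓ 𝓟 (Complex.re ⁻¹' Icc c σ)] fun s ↦ ‖s‖ ^ (-min r 2) := by
    have kernel_isBigO := ((isBigO_inv_sub_sub_inv_sub_cobounded s₀ b).trans
      (isBigO_rpow_neg_cobounded (min_le_right r 2))).const_mul_left A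
    refine ((hO.trans ((isBigO_rpow_neg_cobounded (min_le_left r 2)).mono inf_le_left)).sub
      (kernel_isBigO.mono inf_le_left)).congr' ?_ .rfl
    filter_upwards [mem_inf_of_left (eventually_ne_cobounded s₀),
      mem_inf_of_right (mem_principal_self _)] with s hs₀ hs
    rw [F_eq s hs hs₀, add_sub_cancel_right]
  have G_integrable : VerticalIntegrable G σ :=
    verticalIntegrable_of_isBigO (right_mem_Icc.2 hcσ) hr' G_differentiableOn.continuousOn G_isBigO
  have kernel_integrable : VerticalIntegrable (fun s ↦ A * ((s - s₀)⁻¹ - (s - b)⁻¹)) σ :=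
    (verticalIntegrable_inv_sub_sub_inv_sub hσ.ne (hb.trans_le hcσ).ne).const_mul A
  rw [inverseLaplace_eq_of_isBigO hcσ hr' G_differentiableOn G_isBigO,
    inverseLaplace_congr fun s hs ↦ F_eq s (by simp [hs, hcσ]) fun h ↦ hσ.ne (h ▸ hs),
    inverseLaplace_add G_integrable kernel_integrable, inverseLaplace_const_mul,
    inverseLaplace_inv_sub_sub_inv_sub hσ (hb.trans_le hcσ) ht]

theorem tendsto_inverseLaplace_mul_cexp_of_simplePole {F R : ℂ → ℂ} {s₀ A : ℂ} {c σ r : ℝ}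
    (hc : c < s₀.re) (hσ : s₀.re < σ) (hr : 1 < r)
    (hR : DifferentiableOn ℂ R (Complex.re ⁻¹' Icc c σ))
    (hF : ∀ s, s.re ∈ Icc c σ → s ≠ s₀ → F s = R s + A / (s - s₀))
    (hO : F =O[cobounded ℂ ⊓ 𝓟 (Complex.re ⁻¹' Icc c σ)] fun s ↦ ‖s‖ ^ (-r)) :
    Tendsto (fun t : ℝ ↦ inverseLaplace σ F t * cexp (-s₀ * t)) atTop (𝓝 A) := by
  obtain ⟨b, hb⟩ : ∃ b : ℂ, b.re < c := ⟨(c - 1 : ℝ), by simp⟩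
  have lim := (tendsto_inverseLaplace_mul_cexp_zero hc fun s ↦ R s + A / (s - b)).add
    (((tendsto_cexp_mul_atTop_zero (a := b - s₀) (by simpa using hb.trans hc)).const_sub
      1).const_mul A)
  rw [zero_add, sub_zero, mul_one] at lim
  refine lim.congr' ?_
  filter_upwards [eventually_gt_atTop 0] with t ht
  have exp_cancel : cexp (s₀ * t) * cexp (-s₀ * t) = 1 := by
    rw [← Complex.exp_add, neg_mul, add_neg_cancel, Complex.exp_zero]
  rw [inverseLaplace_eq_add_of_simplePole hb hc hσ hr hR hF hO ht, sub_mul,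
    sub_eq_add_neg _ (s₀ * _), Complex.exp_add, ← neg_mul]
  linear_combination (-A) * exp_cancel

lemma exists_differentiableOn_div_eq_add_div {f g : ℂ → ℂ} {U : Set ℂ} {s₀ : ℂ} (hU : U ∈ 𝓝 s₀)
    (hf : DifferentiableOn ℂ f U) (hg : DifferentiableOn ℂ g U) (hg₀ : g s₀ = 0)
    (hg' : deriv g s₀ ≠ 0) (hne : ∀ s ∈ U, g s = 0 → s = s₀) :
    ∃ R : ℂ → ℂ, DifferentiableOn ℂ R U ∧
      ∀ s ∈ U, s ≠ s₀ → f s / g s = R s + f s₀ / deriv g s₀ / (s - s₀) := by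
  have dslope_ne (s : ℂ) (hs : s ∈ U) : dslope g s₀ s ≠ 0 := by
    rcases eq_or_ne s s₀ with rfl | h
    · rwa [dslope_same]
    · rw [dslope_of_ne _ h, slope_def_field, hg₀, sub_zero]
      exact div_ne_zero (mt (hne s hs) h) (sub_ne_zero.2 h)
  have quotient_differentiableOn : DifferentiableOn ℂ (fun s ↦ f s / dslope g s₀ s) U :=
    hf.div ((Complex.differentiableOn_dslope hU).2 hg) dslope_ne
  refine ⟨dslope (fun s ↦ f s / dslope g s₀ s) s₀,
    (Complex.differentiableOn_dslope hU).2 quotient_differentiableOn, fun s hs h ↦ ?_⟩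
  have sub_ne : s - s₀ ≠ 0 := sub_ne_zero.2 h
  have g_ne : g s ≠ 0 := mt (hne s hs) h
  rw [dslope_of_ne _ h, slope_def_field, dslope_same, dslope_of_ne _ h, slope_def_field, hg₀]
  field_simp
  ring

lemma cpow_ofReal_cpow_inv {q : ℝ} {s : ℂ} (hq : q ≠ 0) (h : |q * Complex.arg s| < π) :
    (s ^ (q : ℂ)) ^ (q⁻¹ : ℂ) = s := by
  have im_eq : (Complex.log s * q).im = q * Complex.arg s := by
    simp [mul_comm, Complex.log_im]
  rw [← Complex.cpow_mul _ (im_eq ▸ (abs_lt.1 h).1) (im_eq ▸ (abs_lt.1 h).2.le),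
    mul_inv_cancel₀ (by exact_mod_cast hq), Complex.cpow_one]

lemma injOn_cpow_re_pos {q : ℝ} (hq0 : 0 < q) (hq2 : q < 2) :
    InjOn (fun s : ℂ ↦ s ^ (q : ℂ)) {s | 0 < s.re} := by
  refine LeftInvOn.injOn (f₁' := fun z : ℂ ↦ z ^ (q⁻¹ : ℂ)) fun s (hs : 0 < s.re) ↦
    cpow_ofReal_cpow_inv hq0.ne' ?_
  have arg_lt := Complex.abs_arg_lt_pi_div_two_iff.2 (.inl hs)
  rw [abs_mul, abs_of_pos hq0]
  nlinarith [abs_nonneg (Complex.arg s)]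

/-! ### The Mittag-Leffler function -/

/-- The Laplace transform `s ↦ s^{q-β} / (s^q - w)` of `t ↦ t^{β-1} E_{q,β}(w t^q)`. -/
noncomputable def mittagLefflerTransform (q β : ℝ) (w s : ℂ) : ℂ :=
  s ^ (q - β : ℂ) / (s ^ (q : ℂ) - w)

lemma cpow_neg_mul_natCast_add {q β : ℝ} {s : ℂ} (hs : s ≠ 0) (i : ℕ) :
    s ^ (-(q * i + β : ℝ) : ℂ) = s ^ (-β : ℂ) * (s ^ (q : ℂ))⁻¹ ^ i := by
  rw [← Complex.cpow_neg, ← Complex.cpow_nat_mul, ← Complex.cpow_add _ _ hs]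
  push_cast
  ring_nf

lemma hasSum_mittagLefflerTransform {q β : ℝ} {w s : ℂ} (hs : s ≠ 0) (hw : ‖w‖ < ‖s‖ ^ q) :
    HasSum (fun i : ℕ ↦ w ^ i * s ^ (-(q * i + β : ℝ) : ℂ)) (mittagLefflerTransform q β w s) := by
  have cpow_ne : s ^ (q : ℂ) ≠ 0 := by simp [Complex.cpow_eq_zero_iff, hs]
  have ratio_lt : ‖w * (s ^ (q : ℂ))⁻¹‖ < 1 := by
    rw [norm_mul, norm_inv, Complex.norm_cpow_real, ← div_eq_mul_inv]
    exact (div_lt_one ((norm_nonneg w).trans_lt hw)).2 hw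
  have sub_ne : s ^ (q : ℂ) - w ≠ 0 := by
    intro h
    rw [← sub_eq_zero.1 h, Complex.norm_cpow_real] at hw
    exact hw.false
  have sum_eq : mittagLefflerTransform q β w s =
      s ^ (-β : ℂ) * (1 - w * (s ^ (q : ℂ))⁻¹)⁻¹ := by
    rw [mittagLefflerTransform, sub_eq_add_neg (q : ℂ), Complex.cpow_add _ _ hs]
    field_simp
  rw [sum_eq]
  refine ((hasSum_geometric_of_norm_lt_one ratio_lt).mul_left _).congr_fun fun i ↦ ?_
  rw [cpow_neg_mul_natCast_add hs, mul_pow]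
  ring

theorem hasSum_inverseLaplace_mittagLefflerTransform {q β σ t : ℝ} {w : ℂ} (hq : 0 < q)
    (hβ : 1 < β) (hσ : 0 < σ) (hw : ‖w‖ < σ ^ q) (ht : 0 < t) :
    HasSum (fun i : ℕ ↦ ((t ^ (β - 1) : ℝ) : ℂ) * ((w * (t ^ q : ℝ)) ^ i / Real.Gamma (q * i + β)))
      (inverseLaplace σ (mittagLefflerTransform q β w) t) := by
  have exponent_gt (i : ℕ) : 1 < q * i + β := by nlinarith [i.cast_nonneg (α := ℝ)]
  have line_ne (s : ℂ) (hs : s.re = σ) : s ≠ 0 := Complex.ne_zero_of_re_pos (hs ▸ hσ)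
  have norm_lt (s : ℂ) (hs : s.re = σ) : ‖w‖ < ‖s‖ ^ q :=
    hw.trans_le (rpow_le_rpow hσ.le (hs ▸ Complex.re_le_norm s) hq.le)
  have integrable (i : ℕ) : VerticalIntegrable
      (fun s : ℂ ↦ w ^ i * s ^ (-(q * i + β : ℝ) : ℂ)) σ volume :=
    (verticalIntegrable_cpow_neg (exponent_gt i) hσ).const_mul _
  have norm_le (i : ℕ) (s : ℂ) (hs : s.re = σ) :
      ‖w ^ i * s ^ (-(q * i + β : ℝ) : ℂ)‖ ≤ (‖w‖ / σ ^ q) ^ i * ‖s ^ (-β : ℂ)‖ := by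
    rw [cpow_neg_mul_natCast_add (line_ne s hs), norm_mul, norm_mul, norm_pow, norm_pow, norm_inv,
      Complex.norm_cpow_real, div_pow, div_eq_mul_inv, ← inv_pow, mul_assoc, mul_comm ‖_‖ (_ ^ i)]
    gcongr
    exact hs ▸ Complex.re_le_norm s
  have summable : Summable fun i : ℕ ↦
      ∫ y : ℝ, ‖w ^ i * (σ + y * I : ℂ) ^ (-(q * i + β : ℝ) : ℂ)‖ := by
    refine .of_nonneg_of_le (fun i ↦ by positivity) (fun i ↦ ?_)
      ((summable_geometric_of_lt_one (by positivity)
        ((div_lt_one (by positivity)).2 hw)).mul_right (∫ y : ℝ, ‖(σ + y * I : ℂ) ^ (-β : ℂ)‖))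
    rw [← integral_const_mul]
    exact integral_mono (integrable i).norm
      ((verticalIntegrable_cpow_neg hβ hσ).norm.const_mul _) fun y ↦ norm_le i _ (by simp)
  rw [← inverseLaplace_congr fun s hs ↦ (hasSum_mittagLefflerTransform (line_ne s hs)
    (norm_lt s hs)).tsum_eq]
  refine (hasSum_inverseLaplace integrable summable t).congr_fun fun i ↦ ?_
  rw [inverseLaplace_const_mul, inverseLaplace_cpow_neg (exponent_gt i) hσ ht, add_sub_assoc,
    Real.rpow_add ht, Real.rpow_mul_natCast ht.le]
  push_cast
  ring

lemma rpow_mul_mittagLeffler_eq_inverseLaplace {q β σ t : ℝ} {w : ℂ} (hq : 0 < q)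
    (hβ : 1 < β) (hσ : 0 < σ) (hw : ‖w‖ < σ ^ q) (ht : 0 < t) :
    ((t ^ (β - 1) : ℝ) : ℂ) * mittagLeffler q β (w * (t ^ q : ℝ)) =
      inverseLaplace σ (mittagLefflerTransform q β w) t := by
  rw [mittagLeffler, ← tsum_mul_left,
    (hasSum_inverseLaplace_mittagLefflerTransform hq hβ hσ hw ht).tsum_eq]

lemma exists_gt_lt_rpow {q : ℝ} (hq : 0 < q) (a b : ℝ) : ∃ σ, a < σ ∧ b < σ ^ q :=
  ((eventually_gt_atTop a).and ((tendsto_rpow_atTop hq).eventually_gt_atTop b)).exists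

lemma summable_mittagLeffler {q β : ℝ} (hq : 0 < q) (hβ : 1 < β) (z : ℂ) :
    Summable fun i : ℕ ↦ z ^ i / (Real.Gamma (q * i + β) : ℂ) := by
  obtain ⟨σ, hσ, hz⟩ := exists_gt_lt_rpow hq 0 ‖z‖
  simpa using (hasSum_inverseLaplace_mittagLefflerTransform hq hβ hσ hz one_pos).summable

lemma mittagLeffler_eq_sum_add {q ν : ℝ} {N : ℕ} (hq : 0 < q) (hN : 1 < q * N + ν) (z : ℂ) :
    mittagLeffler q ν z = ∑ i ∈ Finset.range N, z ^ i / (Real.Gamma (q * i + ν) : ℂ) +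
      z ^ N * mittagLeffler q (q * N + ν) z := by
  have tail_eq (i : ℕ) : z ^ (i + N) / (Real.Gamma (q * (i + N : ℕ) + ν) : ℂ) =
      z ^ N * (z ^ i / (Real.Gamma (q * i + (q * N + ν)) : ℂ)) := by
    rw [pow_add, Nat.cast_add, mul_add, add_assoc]
    ring
  have summable_tail : Summable fun i : ℕ ↦
      z ^ (i + N) / (Real.Gamma (q * (i + N : ℕ) + ν) : ℂ) :=
    ((summable_mittagLeffler hq hN z).mul_left (z ^ N)).congr fun i ↦ (tail_eq i).symm
  calc mittagLeffler q ν z = ∑ i ∈ Finset.range N, z ^ i / (Real.Gamma (q * i + ν) : ℂ) +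
        ∑' i : ℕ, z ^ (i + N) / (Real.Gamma (q * (i + N : ℕ) + ν) : ℂ) :=
        (Summable.sum_add_tsum_nat_add' (f := fun i : ℕ ↦ z ^ i / (Real.Gamma (q * i + ν) : ℂ))
          summable_tail).symm
    _ = _ := by rw [tsum_congr tail_eq, tsum_mul_left, mittagLeffler]

lemma isBigO_mittagLefflerTransform {q : ℝ} (hq : 0 < q) (β : ℝ) (w : ℂ) :
    mittagLefflerTransform q β w =O[cobounded ℂ] fun s ↦ ‖s‖ ^ (-β) := by
  refine .of_bound 2 ?_
  filter_upwards [((tendsto_rpow_atTop hq).comp tendsto_norm_cobounded_atTop).eventually_gt_atTop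
    (2 * ‖w‖), eventually_ne_cobounded 0] with s hs hs₀
  have half_le : ‖s‖ ^ q / 2 ≤ ‖s ^ (q : ℂ) - w‖ := by
    have := norm_sub_norm_le (s ^ (q : ℂ)) w
    rw [Complex.norm_cpow_real] at this
    simp only [Function.comp_apply] at hs
    linarith
  have norm_pos : 0 < ‖s‖ := norm_pos_iff.2 hs₀
  calc ‖mittagLefflerTransform q β w s‖ = ‖s‖ ^ (q - β) / ‖s ^ (q : ℂ) - w‖ := by
        rw [mittagLefflerTransform, norm_div, ← Complex.ofReal_sub, Complex.norm_cpow_real]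
    _ ≤ ‖s‖ ^ (q - β) / (‖s‖ ^ q / 2) := by gcongr
    _ = 2 * ‖‖s‖ ^ (-β)‖ := by
        rw [Real.norm_of_nonneg (by positivity), sub_eq_add_neg, Real.rpow_add norm_pos]
        field_simp

lemma mittagLefflerTransform_eq_add_pole {q : ℝ} (hq0 : 0 < q) (hq2 : q < 2) (β : ℝ) {s₀ : ℂ}
    (hs₀ : 0 < s₀.re) :
    ∃ R : ℂ → ℂ, DifferentiableOn ℂ R {s | 0 < s.re} ∧ ∀ s : ℂ, 0 < s.re → s ≠ s₀ →
      mittagLefflerTransform q β (s₀ ^ (q : ℂ)) s = R s + s₀ ^ (1 - β : ℂ) / q / (s - s₀) := by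
  have cpow_differentiableOn (a : ℂ) : DifferentiableOn ℂ (fun s : ℂ ↦ s ^ a) {s | 0 < s.re} :=
    fun s hs ↦ (differentiableAt_id.cpow_const (.inl hs)).differentiableWithinAt
  have s₀_ne : s₀ ≠ 0 := Complex.ne_zero_of_re_pos hs₀
  have deriv_eq : deriv (fun s : ℂ ↦ s ^ (q : ℂ) - s₀ ^ (q : ℂ)) s₀ = q * s₀ ^ (q - 1 : ℂ) := by
    simpa using (((hasDerivAt_id s₀).cpow_const (.inl hs₀)).sub_const (s₀ ^ (q : ℂ))).deriv
  have cpow_ne : s₀ ^ (q - 1 : ℂ) ≠ 0 := by simp [Complex.cpow_eq_zero_iff, s₀_ne]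
  have q_ne : (q : ℂ) ≠ 0 := by exact_mod_cast hq0.ne'
  obtain ⟨R, hR, hdiv⟩ := exists_differentiableOn_div_eq_add_div
    ((isOpen_lt continuous_const Complex.continuous_re).mem_nhds hs₀)
    (cpow_differentiableOn (q - β)) ((cpow_differentiableOn q).sub_const (s₀ ^ (q : ℂ)))
    (sub_self _) (deriv_eq ▸ mul_ne_zero q_ne cpow_ne)
    fun s hs h ↦ injOn_cpow_re_pos hq0 hq2 hs hs₀ (sub_eq_zero.1 h)
  refine ⟨R, hR, fun s hs h ↦ ?_⟩
  rw [mittagLefflerTransform, hdiv s hs h, deriv_eq, mul_comm, ← div_div,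
    ← Complex.cpow_sub _ _ s₀_ne]
  ring_nf

lemma tendsto_rpow_mul_mittagLeffler_mul_cexp_of_one_lt {q β : ℝ} (hq0 : 0 < q) (hq2 : q < 2)
    (hβ : 1 < β) {s₀ : ℂ} (hs₀ : 0 < s₀.re) :
    Tendsto (fun t : ℝ ↦ ((t ^ (β - 1) : ℝ) : ℂ) *
      mittagLeffler q β (s₀ ^ (q : ℂ) * (t ^ q : ℝ)) * cexp (-s₀ * t)) atTop
      (𝓝 (s₀ ^ (1 - β : ℂ) / q)) := by
  obtain ⟨R, hR, hT⟩ := mittagLefflerTransform_eq_add_pole hq0 hq2 β hs₀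
  obtain ⟨σ, hσ, hw⟩ := exists_gt_lt_rpow hq0 s₀.re ‖s₀ ^ (q : ℂ)‖
  have strip_pos {s : ℂ} (hs : s.re ∈ Icc (s₀.re / 2) σ) : 0 < s.re := (half_pos hs₀).trans_le hs.1
  refine (tendsto_inverseLaplace_mul_cexp_of_simplePole (half_lt_self hs₀) hσ hβ
    (hR.mono fun s hs ↦ strip_pos hs) (fun s hs ↦ hT s (strip_pos hs))
    ((isBigO_mittagLefflerTransform hq0 β _).mono inf_le_left)).congr' ?_
  filter_upwards [eventually_gt_atTop 0] with t ht
  rw [rpow_mul_mittagLeffler_eq_inverseLaplace hq0 hβ (hs₀.trans hσ) hw ht]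

lemma tendsto_rpow_mul_cexp_neg_mul_atTop_zero (r : ℝ) {s₀ : ℂ} (hs₀ : 0 < s₀.re) :
    Tendsto (fun t : ℝ ↦ ((t ^ r : ℝ) : ℂ) * cexp (-s₀ * t)) atTop (𝓝 0) := by
  rw [tendsto_zero_iff_norm_tendsto_zero]
  refine (tendsto_rpow_mul_exp_neg_mul_atTop_nhds_zero r s₀.re hs₀).congr' ?_
  filter_upwards [eventually_ge_atTop 0] with t ht
  simp [Complex.norm_exp, abs_of_nonneg (Real.rpow_nonneg ht r)]

theorem tendsto_rpow_mul_mittagLeffler_mul_cexp {q : ℝ} (hq0 : 0 < q) (hq2 : q < 2) (ν : ℝ)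
    {s₀ : ℂ} (hs₀ : 0 < s₀.re) :
    Tendsto (fun t : ℝ ↦ ((t ^ (ν - 1) : ℝ) : ℂ) *
      mittagLeffler q ν (s₀ ^ (q : ℂ) * (t ^ q : ℝ)) * cexp (-s₀ * t)) atTop
      (𝓝 (s₀ ^ (1 - ν : ℂ) / q)) := by
  obtain ⟨N, hN⟩ := exists_nat_gt ((1 - ν) / q)
  rw [div_lt_iff₀' hq0, sub_lt_iff_lt_add] at hN
  have s₀_ne : s₀ ≠ 0 := Complex.ne_zero_of_re_pos hs₀
  set w : ℂ := s₀ ^ (q : ℂ) with hw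
  have head_lim (i : ℕ) : Tendsto (fun t : ℝ ↦ w ^ i / Real.Gamma (q * i + ν) *
      (((t ^ (q * i + (ν - 1)) : ℝ) : ℂ) * cexp (-s₀ * t))) atTop (𝓝 0) := by
    simpa using (tendsto_rpow_mul_cexp_neg_mul_atTop_zero _ hs₀).const_mul _
  have lim := (tendsto_finsetSum (Finset.range N) fun i _ ↦ head_lim i).add
    ((tendsto_rpow_mul_mittagLeffler_mul_cexp_of_one_lt hq0 hq2 hN hs₀).const_mul (w ^ N))
  have limit_eq : w ^ N * (s₀ ^ (1 - (q * N + ν : ℝ) : ℂ) / q) = s₀ ^ (1 - ν : ℂ) / q := by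
    rw [hw, ← Complex.cpow_nat_mul, mul_div_assoc', ← Complex.cpow_add _ _ s₀_ne]
    push_cast
    ring_nf
  rw [Finset.sum_const_zero, zero_add, limit_eq] at lim
  refine lim.congr' ?_
  filter_upwards [eventually_gt_atTop 0] with t ht
  have rpow_eq (i : ℕ) : t ^ (q * i + (ν - 1)) = (t ^ q) ^ i * t ^ (ν - 1) := by
    rw [Real.rpow_add ht, Real.rpow_mul_natCast ht.le]
  rw [mittagLeffler_eq_sum_add hq0 hN, add_sub_assoc, rpow_eq]
  simp only [mul_add, add_mul, Finset.mul_sum, Finset.sum_mul, rpow_eq, mul_pow]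
  push_cast
  congr 1
  · exact Finset.sum_congr rfl fun i _ ↦ by ring
  · ring

lemma exists_re_pos_cpow_eq {q : ℝ} (hq : 0 < q) {z : ℂ} (hz : z ≠ 0)
    (harg : |Complex.arg z| < q * π / 2) : ∃ s₀ : ℂ, 0 < s₀.re ∧ s₀ ^ (q : ℂ) = z := by
  have arg_lt : |q⁻¹ * Complex.arg z| < π / 2 := by
    rw [abs_mul, abs_of_pos (inv_pos.2 hq), inv_mul_lt_iff₀ hq, ← mul_div_assoc]
    exact harg
  refine ⟨z ^ ((q⁻¹ : ℝ) : ℂ), ?_, ?_⟩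
  · rw [Complex.cpow_ofReal_re, mul_comm (Complex.arg z)]
    exact mul_pos (Real.rpow_pos_of_pos (norm_pos_iff.2 hz) _)
      (Real.cos_pos_of_mem_Ioo (abs_lt.1 arg_lt))
  · simpa using cpow_ofReal_cpow_inv (inv_ne_zero hq.ne') (arg_lt.trans (half_lt_self pi_pos))

end

-- At the poles of `Γ`, which occur for `ν ≤ 0`, Mathlib's `Γ = 0` and `x / 0 = 0` agree with the
-- zeros of `1 / Γ`.
theorem fractional_mode_unstable_general (q ν : ℝ) (hq0 : 0 < q) (hq2 : q < 2)
    (lambda : ℂ) (hl : lambda ≠ 0) (harg : |Complex.arg (-lambda)| < q * π / 2) :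
    Tendsto (fun t : ℝ => ‖((t ^ (ν - 1) : ℝ) : ℂ) *
        mittagLeffler q ν (-(lambda * (t ^ q : ℝ)))‖) atTop atTop := by
  obtain ⟨s₀, hs₀, hpow⟩ := exists_re_pos_cpow_eq hq0 (neg_ne_zero.2 hl) harg
  have limit_pos : 0 < ‖s₀ ^ (1 - ν : ℂ) / q‖ := by
    simp [Complex.cpow_eq_zero_iff, Complex.ne_zero_of_re_pos hs₀, hq0.ne']
  refine ((tendsto_rpow_mul_mittagLeffler_mul_cexp hq0 hq2 ν hs₀).norm.pos_mul_atTop limit_pos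
    (tendsto_exp_atTop.comp (tendsto_id.const_mul_atTop hs₀))).congr fun t ↦ ?_
  have exp_cancel : ‖Complex.exp (-s₀ * t)‖ * rexp (s₀.re * t) = 1 := by
    simp [Complex.norm_exp, ← Real.exp_add]
  rw [hpow, neg_mul, norm_mul _ (Complex.exp _), mul_assoc]
  simp only [Function.comp_apply, id_eq, exp_cancel, mul_one]

/-- Instability of a single fractional mode: if `0 < q < 2` and the pole `λ ≠ 0`
satisfies `|arg (-λ)| < q π / 2`, then the modulus of the impulse response
`t ↦ t^{q-1} E_{q,q}(-λ t^q)` of `1/(s^q + λ)` tends to `+∞` as `t → ∞`. -/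
theorem fractional_mode_unstable (q : ℝ) (hq0 : 0 < q) (hq2 : q < 2)
    (lambda : ℂ) (hl : lambda ≠ 0)
    (harg : |Complex.arg (-lambda)| < q * π / 2) :
    Tendsto (fun t : ℝ => ‖((t ^ (q - 1) : ℝ) : ℂ) *
        mittagLeffler q q (-(lambda * (t ^ q : ℝ)))‖) atTop atTop :=
  fractional_mode_unstable_general q q hq0 hq2 lambda hl harg
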